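/- Let F ⊂ Sym²(ℝⁿ) be a Dirichlet set. The following are equivalent: (i) 0 ∉ Int F; (ii) for every open set X ⊂ ℝⁿ, every function u of type F on X, and every compact set K ⊂ X, sup_K u ≤ sup_{∂K} u. -/

import Mathlib

open Set Metric Filter MeasureTheory Asymptotics
open scoped Topology BigOperators RealInnerProductSpace

noncomputable section

abbrev Euc (n : ℕ) : Type := EuclideanSpace ℝ (Fin n)

abbrev SymMat (n : ℕ) : Type := ↥(selfAdjoint (Matrix (Fin n) (Fin n) ℝ))

/-- `u` is subaffine on `X`. -/
def SubaffineOn {n : ℕ} (X : Set (Euc n)) (u : Euc n → EReal) : Prop :=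
  ∀ K : Set (Euc n), IsCompact K → K ⊆ X →
    ∀ a : Euc n →ᵃ[ℝ] ℝ,
      (∀ x ∈ frontier K, u x ≤ (a x : EReal)) → ∀ x ∈ K, u x ≤ (a x : EReal)

/-- The Hessian matrix of `u` at `x`. -/
def hessMat {n : ℕ} (u : Euc n → ℝ) (x : Euc n) : Matrix (Fin n) (Fin n) ℝ :=
  fun i j => iteratedFDeriv ℝ 2 u x ![EuclideanSpace.single i 1, EuclideanSpace.single j 1]

structure IsDirichletSet {n : ℕ} (F : Set (SymMat n)) : Prop where
  nonempty : F.Nonempty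
  ne_univ : F ≠ Set.univ
  isClosed : IsClosed F
  add_psd : ∀ A ∈ F, ∀ P : SymMat n, (P : Matrix (Fin n) (Fin n) ℝ).PosSemidef → A + P ∈ F

/-- The Dirichlet dual `F̃ = −(∼ Int F)`. -/
def dirDual {n : ℕ} (F : Set (SymMat n)) : Set (SymMat n) := {A | -A ∉ interior F}

/-- A C² function `v` on `X` is of type `F`. -/
def IsTypeFC2 {n : ℕ} (F : Set (SymMat n)) (X : Set (Euc n)) (v : Euc n → ℝ) : Prop :=
  ContDiffOn ℝ 2 v X ∧ ∀ x ∈ X, ∃ A ∈ F, (A : Matrix (Fin n) (Fin n) ℝ) = hessMat v x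

/-- An u.s.c. function `u` is of type `F` on `X`. -/
def IsTypeF {n : ℕ} (F : Set (SymMat n)) (X : Set (Euc n)) (u : Euc n → EReal) : Prop :=
  ∀ v : Euc n → ℝ, IsTypeFC2 (dirDual F) X v → SubaffineOn X (fun x => u x + (v x : EReal))

/-- The ray set `F⃗` of `F`. -/
def raySet {n : ℕ} (F : Set (SymMat n)) : Set (SymMat n) :=
  closure {A : SymMat n | ∃ t₀ : ℝ, ∀ t : ℝ, t₀ ≤ t → t • A ∈ F}

/-- The bilinear form `⟨A v, w⟩` of a matrix. -/
def bilin {n : ℕ} (A : Matrix (Fin n) (Fin n) ℝ) (v w : Euc n) : ℝ :=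
  ∑ i, ∑ j, A i j * v i * w j

/-- `A` is not negative definite. -/
def NotNegDef {n : ℕ} (A : SymMat n) : Prop :=
  ¬ (-(A : Matrix (Fin n) (Fin n) ℝ)).PosDef

def IsLocalDefiningFn {n : ℕ} (Ω U : Set (Euc n)) (ρ : Euc n → ℝ) : Prop :=
  IsOpen U ∧ ContDiffOn ℝ (⊤ : ℕ∞) ρ U ∧ Ω ∩ U = {y ∈ U | ρ y < 0} ∧ ∀ y ∈ U, fderiv ℝ ρ y ≠ 0

def HasSmoothBoundary {n : ℕ} (Ω : Set (Euc n)) : Prop :=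
  ∀ x ∈ frontier Ω, ∃ U ρ, x ∈ U ∧ IsLocalDefiningFn Ω U ρ

/-- `∂Ω` is strictly `G`-convex at `x`. -/
def StrictlyConvexAt {n : ℕ} (G : Set (SymMat n)) (Ω : Set (Euc n)) (x : Euc n) : Prop :=
  ∃ U ρ, x ∈ U ∧ IsLocalDefiningFn Ω U ρ ∧
    ∃ B ∈ interior G, ∀ v w : Euc n, fderiv ℝ ρ x v = 0 → fderiv ℝ ρ x w = 0 →
      bilin (hessMat ρ x) v w = bilin (B : Matrix (Fin n) (Fin n) ℝ) v w

def symOne (n : ℕ) : SymMat n := ⟨1, selfAdjoint.mem_iff.mpr (IsSelfAdjoint.one _)⟩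

/-- `u` is twice differentiable at `x` with Hessian `A`. -/
def TwiceDiffWithHessAt {n : ℕ} (u : Euc n → ℝ) (x : Euc n)
    (A : Matrix (Fin n) (Fin n) ℝ) : Prop :=
  ∃ p : Euc n, (fun h : Euc n => u (x + h) - u x - ⟪p, h⟫ - 1/2 * bilin A h h)
      =o[𝓝 (0 : Euc n)] fun h => ‖h‖ ^ 2

/-! If `0 ∉ Int F` then `v = 0` has type `F̃`, so every function of type `F` is itself subaffine,
and comparison with constants is the maximum principle. If `0 ∈ Int F` then `Int F` also contains a
negative multiple of the identity, so a concave quadratic `c ‖x‖²`, which violates the maximum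
principle on the unit ball, is of type `F`: for `A ∈ Int F` and `B ∈ F̃` one never has `A + B ≤ 0`,
and a `C²` function whose Hessian is nowhere `≤ 0` has no interior local maximum even after
subtracting an affine function. -/

section SecondOrderTest

theorem deriv_deriv_nonpos_of_isLocalMax {f : ℝ → ℝ} {x : ℝ} (hf : ContinuousAt f x)
    (hmax : IsLocalMax f x) : deriv (deriv f) x ≤ 0 := by
  by_contra! hpos
  have hmin : IsLocalMin f x := isLocalMin_of_deriv_deriv_pos hpos hmax.deriv_eq_zero hf
  have hconst : f =ᶠ[𝓝 x] fun _ => f x := by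
    filter_upwards [hmax, hmin] with y hle hge using le_antisymm hle hge
  have hzero : deriv (deriv f) x = 0 := by simpa using hconst.deriv.deriv_eq
  exact hpos.ne' hzero

variable {E : Type*} [NormedAddCommGroup E] [NormedSpace ℝ E] {f : E → ℝ} {x : E}

theorem deriv_deriv_comp_line (hf : ContDiffAt ℝ 2 f x) (h : E) :
    deriv (deriv fun t : ℝ => f (x + t • h)) 0 = iteratedFDeriv ℝ 2 f x ![h, h] := by
  have hline (t : ℝ) : HasDerivAt (fun t : ℝ => x + t • h) h t := by
    simpa using ((hasDerivAt_id t).smul_const h).const_add x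
  have hline_tendsto : Tendsto (fun t : ℝ => x + t • h) (𝓝 0) (𝓝 x) := by
    simpa using (hline 0).continuousAt.tendsto
  have hderiv : (deriv fun t : ℝ => f (x + t • h)) =ᶠ[𝓝 0] fun t => fderiv ℝ f (x + t • h) h := by
    filter_upwards [hline_tendsto.eventually (hf.eventually (by simp))] with t ht
    exact ((ht.differentiableAt two_ne_zero).hasFDerivAt.comp_hasDerivAt t (hline t)).deriv
  have hfderiv : HasFDerivAt (fderiv ℝ f) (fderiv ℝ (fderiv ℝ f) x) (x + (0 : ℝ) • h) := by
    have hdiff : DifferentiableAt ℝ (fderiv ℝ f) x :=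
      (hf.fderiv_right (m := 1) (by norm_num)).differentiableAt one_ne_zero
    simpa using hdiff.hasFDerivAt
  have hslope : HasDerivAt (fun t : ℝ => fderiv ℝ f (x + t • h)) (fderiv ℝ (fderiv ℝ f) x h) 0 :=
    hfderiv.comp_hasDerivAt 0 (hline 0)
  rw [hderiv.deriv_eq, iteratedFDeriv_two_apply]
  simpa using (hslope.clm_apply (hasDerivAt_const 0 h)).deriv

theorem iteratedFDeriv_two_nonpos_of_isLocalMax (hf : ContDiffAt ℝ 2 f x) (hmax : IsLocalMax f x)
    (h : E) : iteratedFDeriv ℝ 2 f x ![h, h] ≤ 0 := by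
  have hline : ContinuousAt (fun t : ℝ => x + t • h) 0 := by fun_prop
  have hx : x + (0 : ℝ) • h = x := by rw [zero_smul, add_zero]
  rw [← deriv_deriv_comp_line hf h]
  apply deriv_deriv_nonpos_of_isLocalMax
  · exact ContinuousAt.comp (g := f) (hx.symm ▸ hf.continuousAt) hline
  · exact IsLocalMax.comp_continuous (f := f) (hx.symm ▸ hmax) hline

end SecondOrderTest

theorem iteratedFDeriv_two_norm_sq {E : Type*} [NormedAddCommGroup E] [InnerProductSpace ℝ E]
    (x h k : E) : iteratedFDeriv ℝ 2 (fun y : E => ‖y‖ ^ 2) x ![h, k] = 2 * ⟪h, k⟫ := by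
  have hhess : HasFDerivAt (fderiv ℝ fun y : E => ‖y‖ ^ 2) (2 • innerSL ℝ (E := E)) x := by
    rw [fderiv_norm_sq]
    exact (innerSL ℝ).hasFDerivAt.const_smul 2
  rw [iteratedFDeriv_two_apply, hhess.fderiv, two_smul]
  exact (two_mul _).symm

theorem exists_neg_smul_mem_of_mem_nhds_zero {E : Type*} [AddCommGroup E] [Module ℝ E]
    [TopologicalSpace E] [ContinuousSMul ℝ E] {s : Set E} (hs : s ∈ 𝓝 0) (v : E) :
    ∃ c < (0 : ℝ), c • v ∈ s := by
  have hlim : Tendsto (fun c : ℝ => c • v) (𝓝[<] 0) (𝓝 0) :=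
    (Continuous.tendsto' (by fun_prop) 0 0 (zero_smul ℝ v)).mono_left nhdsWithin_le_nhds
  exact (eventually_mem_nhdsWithin.and (hlim.eventually hs)).exists

theorem not_iSup_closedBall_le_iSup_frontier_of_neg {E : Type*} [SeminormedAddCommGroup E] {c : ℝ}
    (hc : c < 0) :
    ¬ ⨆ x ∈ closedBall (0 : E) 1, ((c * ‖x‖ ^ 2 : ℝ) : EReal) ≤
      ⨆ x ∈ frontier (closedBall (0 : E) 1), ((c * ‖x‖ ^ 2 : ℝ) : EReal) := by
  have hfrontier :
      ⨆ x ∈ frontier (closedBall (0 : E) 1), ((c * ‖x‖ ^ 2 : ℝ) : EReal) ≤ (c : EReal) := by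
    refine iSup₂_le fun x hx => ?_
    have hx1 : ‖x‖ = 1 := by simpa using frontier_closedBall_subset_sphere hx
    simp [hx1]
  have hcenter : (0 : EReal) ≤ ⨆ x ∈ closedBall (0 : E) 1, ((c * ‖x‖ ^ 2 : ℝ) : EReal) :=
    le_iSup₂_of_le 0 (mem_closedBall_self zero_le_one) (by simp)
  exact fun hle => hc.not_ge (EReal.coe_nonneg.mp (hcenter.trans (hle.trans hfrontier)))

section Hessian

open scoped MatrixOrder

variable {n : ℕ} {u v : Euc n → ℝ} {x : Euc n}

theorem hessMat_const (c : ℝ) (x : Euc n) : hessMat (fun _ => c) x = 0 := by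
  ext i j
  simp [hessMat, iteratedFDeriv_two_apply]

theorem hessMat_add (hu : ContDiffAt ℝ 2 u x) (hv : ContDiffAt ℝ 2 v x) :
    hessMat (fun y => u y + v y) x = hessMat u x + hessMat v x := by
  ext i j
  exact DFunLike.congr_fun (fun_iteratedFDeriv_add_apply (i := 2) hu hv) _

theorem hessMat_const_mul (c : ℝ) (hu : ContDiffAt ℝ 2 u x) :
    hessMat (fun y => c * u y) x = c • hessMat u x := by
  ext i j
  exact DFunLike.congr_fun (iteratedFDeriv_const_smul_apply' (a := c) (i := 2) hu) _

theorem hessMat_sub_continuousAffineMap (hu : ContDiffAt ℝ 2 u x) (a : Euc n →ᴬ[ℝ] ℝ) :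
    hessMat (fun y => u y - a y) x = hessMat u x := by
  have ha : fderiv ℝ (fderiv ℝ a) x = 0 := by
    rw [funext fun y => a.fderiv (x := y), fderiv_fun_const, Pi.zero_apply]
  ext i j
  rw [hessMat, fun_iteratedFDeriv_sub_apply (i := 2) hu a.contDiff.contDiffAt, sub_apply,
    iteratedFDeriv_two_apply a, ha]
  exact sub_zero _

theorem hessMat_norm_sq (x : Euc n) : hessMat (fun y => ‖y‖ ^ 2) x = (2 : ℝ) • 1 := by
  ext i j
  rw [hessMat, iteratedFDeriv_two_norm_sq]
  simp [EuclideanSpace.inner_single_left, Matrix.one_apply]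

theorem isHermitian_hessMat (hu : ContDiffAt ℝ 2 u x) : (hessMat u x).IsHermitian := by
  ext i j
  simpa [hessMat, iteratedFDeriv_two_apply] using hu.isSymmSndFDerivAt (by simp) _ _

theorem dotProduct_hessMat_mulVec (u : Euc n → ℝ) (x h k : Euc n) :
    h ⬝ᵥ (hessMat u x).mulVec k = iteratedFDeriv ℝ 2 u x ![h, k] := by
  let b := (EuclideanSpace.basisFun (Fin n) ℝ).toBasis
  have hmat : hessMat u x = LinearMap.toMatrix₂ b b (bilinearIteratedFDerivTwo ℝ u x) := by
    ext i j
    simp [b, hessMat, LinearMap.toMatrix₂_apply, bilinearIteratedFDerivTwo_eq_iteratedFDeriv]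
  rw [hmat, ← bilinearIteratedFDerivTwo_eq_iteratedFDeriv, apply_eq_dotProduct_toMatrix₂_mulVec b b]
  rfl

theorem hessMat_nonpos_of_isLocalMax (hu : ContDiffAt ℝ 2 u x) (hmax : IsLocalMax u x) :
    hessMat u x ≤ 0 := by
  rw [Matrix.le_iff, zero_sub]
  refine .of_dotProduct_mulVec_nonneg (isHermitian_hessMat hu).neg fun h => ?_
  rw [Matrix.neg_mulVec, dotProduct_neg, neg_nonneg, star_trivial]
  exact (dotProduct_hessMat_mulVec u x (.toLp 2 h) (.toLp 2 h)).trans_le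
    (iteratedFDeriv_two_nonpos_of_isLocalMax hu hmax _)

end Hessian

instance SymMat.instContinuousSMul (n : ℕ) : ContinuousSMul ℝ (SymMat n) where
  continuous_smul := by
    rw [continuous_induced_rng]
    exact continuous_fst.smul (continuous_subtype_val.comp continuous_snd)

section TypeF

open scoped MatrixOrder

variable {n : ℕ} {F : Set (SymMat n)} {X : Set (Euc n)}

theorem IsDirichletSet.isUpperSet (hF : IsDirichletSet F) : IsUpperSet F := fun A B hAB hA => by
  simpa using hF.add_psd A hA (B - A) hAB

theorem not_add_nonpos_of_mem_interior_of_mem_dirDual (hF : IsUpperSet F) {A B : SymMat n}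
    (hA : A ∈ interior F) (hB : B ∈ dirDual F) : ¬ A + B ≤ 0 := fun hAB =>
  hB (hF.interior (le_neg_iff_add_nonpos_right.mpr hAB) hA)

theorem subaffineOn_of_not_hessMat_nonpos {w : Euc n → ℝ} (hw : ContDiffOn ℝ 2 w X)
    (hhess : ∀ x ∈ interior X, ¬ hessMat w x ≤ 0) : SubaffineOn X fun x => (w x : EReal) := by
  intro K hK hKX a hfrontier x hx
  let a' : Euc n →ᴬ[ℝ] ℝ := ⟨a, a.continuous_of_finiteDimensional⟩
  obtain ⟨y, hyK, hymax⟩ := hK.exists_isMaxOn ⟨x, hx⟩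
    ((hw.continuousOn.mono hKX).sub a'.continuous.continuousOn)
  have hy_not_interior : y ∉ interior K := by
    intro hy
    have hyX : y ∈ interior X := interior_mono hKX hy
    have hwy : ContDiffAt ℝ 2 w y := hw.contDiffAt (mem_interior_iff_mem_nhds.mp hyX)
    refine hhess y hyX ?_
    rw [← hessMat_sub_continuousAffineMap hwy a']
    exact hessMat_nonpos_of_isLocalMax (hwy.sub a'.contDiff.contDiffAt)
      (hymax.isLocalMax (mem_interior_iff_mem_nhds.mp hy))
  have hy_frontier : y ∈ frontier K := hK.isClosed.frontier_eq ▸ ⟨hyK, hy_not_interior⟩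
  have hwy_le : w y ≤ a y := EReal.coe_le_coe_iff.mp (hfrontier y hy_frontier)
  have hxy : w x - a x ≤ w y - a y := hymax hx
  exact EReal.coe_le_coe_iff.mpr (by linarith)

theorem IsTypeFC2.isTypeF {u : Euc n → ℝ} (hF : IsUpperSet F) (hu : IsTypeFC2 (interior F) X u) :
    IsTypeF F X fun x => (u x : EReal) := by
  rintro v ⟨hv, hvhess⟩
  obtain ⟨hu, huhess⟩ := hu
  simp only [← EReal.coe_add]
  refine subaffineOn_of_not_hessMat_nonpos (hu.add hv) fun x hx hle => ?_
  have hX : X ∈ 𝓝 x := mem_interior_iff_mem_nhds.mp hx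
  obtain ⟨A, hA, hAu⟩ := huhess x (interior_subset hx)
  obtain ⟨B, hB, hBv⟩ := hvhess x (interior_subset hx)
  rw [hessMat_add (hu.contDiffAt hX) (hv.contDiffAt hX), ← hAu, ← hBv] at hle
  exact not_add_nonpos_of_mem_interior_of_mem_dirDual hF hA hB hle

theorem isTypeFC2_const_mul_norm_sq {c : ℝ} (hc : c • (2 : ℝ) • symOne n ∈ F) :
    IsTypeFC2 F X fun x => c * ‖x‖ ^ 2 := by
  have hsq : ContDiff ℝ 2 fun x : Euc n => ‖x‖ ^ 2 := contDiff_norm_sq ℝ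
  refine ⟨(contDiff_const.mul hsq).contDiffOn, fun x _ => ⟨_, hc, ?_⟩⟩
  rw [hessMat_const_mul c hsq.contDiffAt, hessMat_norm_sq]
  rfl

theorem IsTypeF.subaffineOn {u : Euc n → EReal} (h0 : 0 ∉ interior F) (hu : IsTypeF F X u) :
    SubaffineOn X u := by
  have hzero : IsTypeFC2 (dirDual F) X fun _ => 0 :=
    ⟨contDiffOn_const, fun x _ => ⟨0, by rwa [dirDual, mem_ofPred_eq, neg_zero],
      (hessMat_const 0 x).symm⟩⟩
  simpa using hu _ hzero

theorem SubaffineOn.iSup_le_iSup_frontier {u : Euc n → EReal} (hu : SubaffineOn X u)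
    {K : Set (Euc n)} (hK : IsCompact K) (hKX : K ⊆ X) :
    ⨆ x ∈ K, u x ≤ ⨆ x ∈ frontier K, u x := by
  refine iSup₂_le fun x hx => EReal.le_of_forall_lt_iff_le.mp fun c hc => ?_
  have hfrontier : ∀ y ∈ frontier K, u y ≤ AffineMap.const ℝ (Euc n) c y := fun y hy =>
    (le_iSup₂ (f := fun z (_ : z ∈ frontier K) => u z) y hy).trans hc.le
  exact hu K hK hKX (AffineMap.const ℝ (Euc n) c) hfrontier x hx

theorem maximum_principle_iff_zero_not_mem_interior_general (hF : IsUpperSet F) :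
    (0 : SymMat n) ∉ interior F ↔
      ∀ X : Set (Euc n), IsOpen X → ∀ u : Euc n → EReal,
        UpperSemicontinuousOn u X → (∀ x ∈ X, u x ≠ ⊤) → IsTypeF F X u →
        ∀ K : Set (Euc n), IsCompact K → K ⊆ X →
          ⨆ x ∈ K, u x ≤ ⨆ x ∈ frontier K, u x := by
  refine ⟨fun h0 X _ u _ _ hu K hK hKX => (hu.subaffineOn h0).iSup_le_iSup_frontier hK hKX,
    fun hmax h0 => ?_⟩
  obtain ⟨c, hc, hcF⟩ := exists_neg_smul_mem_of_mem_nhds_zero (isOpen_interior.mem_nhds h0)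
    ((2 : ℝ) • symOne n)
  have hcont : Continuous fun x : Euc n => ((c * ‖x‖ ^ 2 : ℝ) : EReal) :=
    continuous_coe_real_ereal.comp (by fun_prop)
  exact not_iSup_closedBall_le_iSup_frontier_of_neg hc <|
    hmax univ isOpen_univ _ (hcont.upperSemicontinuous.upperSemicontinuousOn univ)
      (fun x _ => EReal.coe_ne_top _) ((isTypeFC2_const_mul_norm_sq hcF).isTypeF hF)
      (closedBall 0 1) (isCompact_closedBall 0 1) (subset_univ _)

end TypeF

/-- Proposition 4.8: the maximum principle holds for all functions of
type `F` iff `0 ∉ Int F`. -/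
theorem maximum_principle_iff_zero_not_mem_interior {n : ℕ} (F : Set (SymMat n))
    (hF : IsDirichletSet F) :
    (0 : SymMat n) ∉ interior F ↔
      ∀ X : Set (Euc n), IsOpen X → ∀ u : Euc n → EReal,
        UpperSemicontinuousOn u X → (∀ x ∈ X, u x ≠ ⊤) → IsTypeF F X u →
        ∀ K : Set (Euc n), IsCompact K → K ⊆ X →
          ⨆ x ∈ K, u x ≤ ⨆ x ∈ frontier K, u x :=
  maximum_principle_iff_zero_not_mem_interior_general hF.isUpperSet
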